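/- For fixed r, c̄ > 0 and μ > 0, the function g(w) = w r² + μ(1−w)c̄²/(μ+w) on [0,1] has derivative g'(w) = r² − μ(μ+1)c̄²/(μ+w)², which is monotone increasing in w; hence g is convex on [0,1] and its global minimizer is given by the closed-form weight update: w* = 0 if r² ≥ ((μ+1)/μ)c̄², w* = 1 if r² ≤ (μ/(μ+1))c̄², and w* = (c̄/r)√(μ(μ+1)) − μ otherwise (for r > 0). -/

import Mathlib

/-!
Since `μ (1 - w) = μ (μ + 1) - μ (μ + w)`, the objective equals
`w r² + K / (μ + w) - μ c²` with `K = μ (μ + 1) c² > 0`. Its derivative `r² - K / (μ + w)²` is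
visibly increasing for `w > -μ`, which gives convexity. The graph of `g` lies above each of its
tangents (`gnc_tangent_le`), so `v` is a global minimizer as soon as the first-order condition
`0 ≤ g'(v) (w - v)` holds for all `w ∈ [0,1]`. At `v = 0` this says `g'(0) ≥ 0`, at `v = 1` it says
`g'(1) ≤ 0`; otherwise `v` is the root of `g'`, that is `(μ + v)² = K / r²`, and the failure of the
two boundary conditions is exactly what places this root in `[0,1]`.
-/

open Set

/-- The tangent of `g` at `v` lies below its graph: the gap is
`μ (μ + 1) c² (w - v)² / ((μ + w) (μ + v)²)`. -/
theorem gnc_tangent_le (r c μ v w : ℝ) (hμ : 0 < μ) (hv : 0 ≤ v) (hw : 0 ≤ w) :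
    (v * r ^ 2 + μ * (1 - v) * c ^ 2 / (μ + v)) +
      (r ^ 2 - μ * (μ + 1) * c ^ 2 / (μ + v) ^ 2) * (w - v) ≤
    w * r ^ 2 + μ * (1 - w) * c ^ 2 / (μ + w) := by
  have hv' : 0 < μ + v := by linarith
  have hw' : 0 < μ + w := by linarith
  have gap : w * r ^ 2 + μ * (1 - w) * c ^ 2 / (μ + w) -
      ((v * r ^ 2 + μ * (1 - v) * c ^ 2 / (μ + v)) +
        (r ^ 2 - μ * (μ + 1) * c ^ 2 / (μ + v) ^ 2) * (w - v)) =
      μ * (μ + 1) * c ^ 2 * (w - v) ^ 2 / ((μ + w) * (μ + v) ^ 2) := by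
    field_simp
    ring
  have : 0 ≤ μ * (μ + 1) * c ^ 2 * (w - v) ^ 2 / ((μ + w) * (μ + v) ^ 2) := by positivity
  linarith

/-- For fixed `r, cbar > 0` and `μ > 0`, the function
`g(w) = w r² + μ(1−w)cbar²/(μ+w)` on `[0,1]` has derivative
`g'(w) = r² − μ(μ+1)cbar²/(μ+w)²`, which is monotone increasing in `w`; hence `g` is
convex on `[0,1]` and its global minimizer is given by the closed-form weight update. -/
theorem gnc_weight_update (r cbar μ : ℝ) (hr : 0 < r) (hc : 0 < cbar) (hμ : 0 < μ) :
    let g : ℝ → ℝ := fun w => w * r ^ 2 + μ * (1 - w) * cbar ^ 2 / (μ + w)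
    let g' : ℝ → ℝ := fun w => r ^ 2 - μ * (μ + 1) * cbar ^ 2 / (μ + w) ^ 2
    let wstar : ℝ :=
      if ((μ + 1) / μ) * cbar ^ 2 ≤ r ^ 2 then 0
      else if r ^ 2 ≤ (μ / (μ + 1)) * cbar ^ 2 then 1
      else cbar / r * Real.sqrt (μ * (μ + 1)) - μ
    (∀ w ∈ Icc (0 : ℝ) 1, HasDerivAt g (g' w) w) ∧
    MonotoneOn g' (Icc (0 : ℝ) 1) ∧
    ConvexOn ℝ (Icc (0 : ℝ) 1) g ∧
    wstar ∈ Icc (0 : ℝ) 1 ∧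
    (∀ w ∈ Icc (0 : ℝ) 1, g wstar ≤ g w) := by
  intro g g' wstar
  have hderiv : ∀ w ∈ Icc (0 : ℝ) 1, HasDerivAt g (g' w) w := by
    intro w hw
    have hw' : μ + w ≠ 0 := by linarith [hw.1]
    have h1 : HasDerivAt (fun w : ℝ => w * r ^ 2) (1 * r ^ 2) w :=
      (hasDerivAt_id' w).mul_const _
    have h2 : HasDerivAt (fun w : ℝ => μ * (1 - w) * cbar ^ 2) (μ * (-1) * cbar ^ 2) w :=
      (((hasDerivAt_id' w).const_sub 1).const_mul μ).mul_const _
    have h3 : HasDerivAt (fun w : ℝ => μ + w) 1 w := (hasDerivAt_id' w).const_add μ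
    refine (h1.add (h2.div h3 hw')).congr_deriv ?_
    simp only [g']
    field_simp
    ring
  have hmono : MonotoneOn g' (Icc (0 : ℝ) 1) := by
    intro a ha b hb hab
    have ha' : 0 < μ + a := by linarith [ha.1]
    simp only [g']
    gcongr
  have hconv : ConvexOn ℝ (Icc (0 : ℝ) 1) g := by
    have hint : ∀ w ∈ interior (Icc (0 : ℝ) 1), HasDerivAt g (g' w) w :=
      fun w hw => hderiv w (interior_subset hw)
    refine MonotoneOn.convexOn_of_deriv (convex_Icc 0 1)
      (fun w hw => (hderiv w hw).continuousAt.continuousWithinAt)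
      (fun w hw => (hint w hw).differentiableAt.differentiableWithinAt) ?_
    exact (hmono.mono interior_subset).congr fun w hw => (hint w hw).deriv.symm
  have hmin : wstar ∈ Icc (0 : ℝ) 1 ∧ ∀ w ∈ Icc (0 : ℝ) 1, 0 ≤ g' wstar * (w - wstar) := by
    simp only [wstar]
    split_ifs with h0 h1
    · refine ⟨by simp, fun w hw => mul_nonneg ?_ (by linarith [hw.1])⟩
      have : g' 0 = r ^ 2 - (μ + 1) / μ * cbar ^ 2 := by
        simp only [g']
        field_simp
        ring
      linarith
    · refine ⟨by simp, fun w hw => mul_nonneg_of_nonpos_of_nonpos ?_ (by linarith [hw.2])⟩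
      have : g' 1 = r ^ 2 - μ / (μ + 1) * cbar ^ 2 := by
        simp only [g']
        field_simp
      linarith
    · push Not at h0 h1
      have hs := Real.sq_sqrt (show 0 ≤ μ * (μ + 1) by positivity)
      have hspos : 0 < √(μ * (μ + 1)) := Real.sqrt_pos.2 (by positivity)
      set s := √(μ * (μ + 1))
      rw [div_mul_eq_mul_div, lt_div_iff₀ hμ] at h0
      rw [div_mul_eq_mul_div, div_lt_iff₀ (by positivity)] at h1
      -- `μ² r² ≤ c² μ (μ + 1)` and `c² μ (μ + 1) ≤ (μ + 1)² r²`, after taking square roots.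
      have lo : μ * r ≤ cbar * s := by
        refine (sq_le_sq₀ (by positivity) (by positivity)).1 ?_
        rw [mul_pow, mul_pow, hs]
        nlinarith
      have hi : cbar * s ≤ (μ + 1) * r := by
        refine (sq_le_sq₀ (by positivity) (by positivity)).1 ?_
        rw [mul_pow, mul_pow, hs]
        nlinarith
      have lo' : μ ≤ cbar / r * s := by
        rwa [div_mul_eq_mul_div, le_div_iff₀ hr]
      have hi' : cbar / r * s ≤ μ + 1 := by
        rwa [div_mul_eq_mul_div, div_le_iff₀ hr]
      refine ⟨⟨by linarith, by linarith⟩, fun w _ => ?_⟩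
      have : g' (cbar / r * s - μ) = 0 := by
        simp only [g', add_sub_cancel]
        rw [mul_pow, hs]
        field_simp
        ring
      rw [this, zero_mul]
  refine ⟨hderiv, hmono, hconv, hmin.1, fun w hw => ?_⟩
  have htan : g wstar + g' wstar * (w - wstar) ≤ g w :=
    gnc_tangent_le r cbar μ wstar w hμ hmin.1.1 hw.1
  linarith [hmin.2 w hw]
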